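/- arXiv:1701.01705 — 3 statements merged into one kernel-verified Lean document; each statement's English description precedes it below -/
import Mathlib

section
/- Proposition 2.8, second part: Let A be a fanning frame with Jacobi endomorphism K(t) = (1/4)F̈(t)², horizontal frame H_i(t) = P_h(t)ȧ_i(t), and Schwarzian {A,t}. Then for all t and all j: K(t)a_j(t) = (1/2)Σ_i a_i(t)·{A,t}_{ij} and K(t)H_j(t) = (1/2)Σ_i H_i(t)·{A,t}_{ij}. Equivalently, in the basis (a_1(t),…,a_n(t),H_1(t),…,H_n(t)) of V the matrix of K(t) is block-diagonal with both diagonal blocks equal to (1/2){A,t}; in particular K(t) preserves both ℓ(t) and h(t). -/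
/-!
The coefficients of linear combinations of a frame commute with endomorphisms of `V` applied to its
vectors, so write `F A` for the frame `F a₁, …, F aₙ` and differentiate `F A = 0` and `F A' = A`
twice. The first derivatives give `F' A = -A` and `F' A' = A' + A P`. The second ones say that `F''`
interchanges the frame and the horizontal frame up to coefficients, `F'' A = -2 H` and
`F'' H = -A {A,t}`. Applying `F''` once more therefore multiplies each of the two frames by
`2 {A,t}`.
-/

section Algebra

variable {R W : Type*} [Ring R] [AddCommGroup W] [Module R W]
  {f₁ f₂ : W →ₗ[R] W} {a a₁ a₂ : W} {p q p₁ : R}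

-- Here `a₁ + f₁ a₁` is twice the horizontal frame and the coefficient on the right is twice the
-- Schwarzian: doubling both avoids division, so the identity holds over every ring.
theorem map_velocity_add_map
    (h_acc : a₂ + p • a₁ + q • a = 0) (h_frame : f₁ a = -a) (h_velocity : f₁ a₁ = a₁ + p • a)
    (h_frame₂ : f₂ a = -(a₁ + f₁ a₁)) (h_velocity₂ : f₂ a₁ + f₁ a₂ = a₂ + (p • a₁ + p₁ • a)) :
    f₂ (a₁ + f₁ a₁) = -((4 • q - p * p - 2 • p₁) • a) := by
  have acc_eq : a₂ = -(p • a₁) - q • a := by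
    rw [sub_eq_add_neg, ← sub_eq_zero, ← h_acc]; abel
  have map_acc : f₁ a₂ = -(p • (a₁ + p • a)) + q • a := by
    rw [acc_eq, map_sub, map_neg, map_smul, map_smul, h_velocity, h_frame, smul_neg, sub_neg_eq_add]
  have map₂_velocity : f₂ a₁ = p • a₁ + (p * p) • a - 2 • q • a + p₁ • a := by
    rw [eq_sub_of_add_eq h_velocity₂, map_acc, acc_eq, smul_add, mul_smul]
    abel
  have map₂_frame : f₂ a = -(2 • a₁ + p • a) := by
    rw [h_frame₂, h_velocity, two_smul, add_assoc]
  calc f₂ (a₁ + f₁ a₁) = 2 • f₂ a₁ + p • f₂ a := by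
        rw [h_velocity, map_add, map_add, map_smul, two_smul, add_assoc]
    _ = -((4 • q - p * p - 2 • p₁) • a) := by
        rw [map₂_velocity, map₂_frame]
        simp only [smul_add, smul_neg, sub_smul, add_smul, two_smul, mul_smul, smul_assoc]
        abel

theorem map_map_of_map_eq_smul {f : W →ₗ[R] W} {h : W} {s : R} (h_frame : f a = -(2 • h))
    (h_horizontal : f h = -(s • a)) :
    f (f a) = 2 • s • a ∧ f (f h) = 2 • s • h := by
  constructor
  · rw [h_frame, map_neg, map_nsmul, h_horizontal, smul_neg, neg_neg]
  · rw [h_horizontal, map_neg, map_smul, h_frame, smul_neg, neg_neg, smul_comm]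

end Algebra

section Schwarzian

open scoped Matrix

variable {𝕜 ι : Type*} [Field 𝕜] [Fintype ι]

/-- The Schwarzian `2 Q - P² / 2 - P'` of a frame satisfying `A'' + A' P + A Q = 0`. -/
def schwarzian (P Q P' : Matrix ι ι 𝕜) : Matrix ι ι 𝕜 :=
  (2 : 𝕜) • Q - (1 / 2 : 𝕜) • (P * P) - P'

theorem two_smul_schwarzian [NeZero (2 : 𝕜)] (P Q P' : Matrix ι ι 𝕜) :
    2 • schwarzian P Q P' = 4 • Q - P * P - 2 • P' := by
  have two_smul_half : 2 • (1 / 2 : 𝕜) • (P * P) = P * P := by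
    rw [← ofNat_smul_eq_nsmul 𝕜, smul_smul, mul_one_div_cancel two_ne_zero, one_smul]
  rw [schwarzian, smul_sub, smul_sub, two_smul_half, ofNat_smul_eq_nsmul 𝕜, smul_smul,
    show 2 * 2 = 4 from rfl]

theorem transpose_schwarzian (P Q P' : Matrix ι ι 𝕜) :
    (schwarzian P Q P')ᵀ = schwarzian Pᵀ Qᵀ P'ᵀ := by
  simp [schwarzian]

end Schwarzian

section Frames

open scoped Matrix Matrix.Module

variable {𝕜 ι V W : Type*} [NontriviallyNormedField 𝕜] [Fintype ι] [DecidableEq ι]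
  [NormedAddCommGroup V] [NormedSpace 𝕜 V] [NormedAddCommGroup W] [NormedSpace 𝕜 W]

/-- The frame obtained by applying a continuous linear map to each vector of a frame. A frame is a
family `ι → V`, and the combination `A M` of a frame `A` with a coefficient matrix `M`, whose `j`-th
vector is `∑ i, M i j • A i`, is `Mᵀ • A` for the left action of matrices on families. -/
def frameMap (f : V →L[𝕜] W) : (ι → V) →ₗ[Matrix ι ι 𝕜] (ι → W) :=
  (f : V →ₗ[𝕜] W).mapMatrixModule ι

/-- The horizontal frame `P_h a'`, where `f'` is the derivative of the fundamental endomorphism, so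
that `P_h = (id + f') / 2`, and `a'` is the derivative of the frame. -/
def horizontalFrame (f' : V →L[𝕜] V) (a' : ι → V) : ι → V :=
  (1 / 2 : 𝕜) • (a' + frameMap f' a')

theorem two_smul_horizontalFrame [NeZero (2 : 𝕜)] (f' : V →L[𝕜] V) (a' : ι → V) :
    2 • horizontalFrame f' a' = a' + frameMap f' a' := by
  rw [← ofNat_smul_eq_nsmul 𝕜, horizontalFrame, smul_smul, mul_one_div_cancel two_ne_zero, one_smul]

theorem hasDerivAt_transpose_smul {A : 𝕜 → ι → V} {A' : ι → V} {M : 𝕜 → Matrix ι ι 𝕜}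
    {M' : Matrix ι ι 𝕜} {t : 𝕜} (hM : ∀ i j, HasDerivAt (fun s => M s i j) (M' i j) t)
    (hA : HasDerivAt A A' t) :
    HasDerivAt (fun s => (M s)ᵀ • A s) ((M t)ᵀ • A' + M'ᵀ • A t) t := by
  refine hasDerivAt_pi.2 fun j => ?_
  simpa [Finset.sum_add_distrib] using
    HasDerivAt.fun_sum (u := Finset.univ) fun i _ => (hM i j).smul (hasDerivAt_pi.1 hA i)

theorem frameMap_add_frameMap_of_hasDerivAt {F : 𝕜 → V →L[𝕜] W} {F' : V →L[𝕜] W} {u : 𝕜 → ι → V}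
    {u' : ι → V} {v : 𝕜 → ι → W} {v' : ι → W} {t : 𝕜} (hF : HasDerivAt F F' t)
    (hu : HasDerivAt u u' t) (hv : HasDerivAt v v' t) (h : ∀ s, frameMap (F s) (u s) = v s) :
    frameMap F' (u t) + frameMap (F t) u' = v' := by
  obtain rfl : (fun s => frameMap (F s) (u s)) = v := funext h
  exact (hasDerivAt_pi.2 fun i => hF.clm_apply (hasDerivAt_pi.1 hu i)).unique hv

section Curves

variable {A A' : 𝕜 → ι → V} {A'' : ι → V} {F F' : 𝕜 → V →L[𝕜] V} {f' f'' : V →L[𝕜] V}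
  {t : 𝕜}

theorem frameMap_deriv_frame (hA : HasDerivAt A (A' t) t) (hF : HasDerivAt F f' t)
    (h_frame : ∀ s, frameMap (F s) (A s) = 0) (h_velocity : frameMap (F t) (A' t) = A t) :
    frameMap f' (A t) = -A t := by
  have h := frameMap_add_frameMap_of_hasDerivAt hF hA (hasDerivAt_const t 0) h_frame
  rw [h_velocity] at h
  exact eq_neg_of_add_eq_zero_left h

theorem frameMap_deriv_velocity {P Q : Matrix ι ι 𝕜} (hA : HasDerivAt A (A' t) t)
    (hA' : HasDerivAt A' A'' t) (hF : HasDerivAt F f' t)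
    (h_acc : A'' + Pᵀ • A' t + Qᵀ • A t = 0)
    (h_frame : frameMap (F t) (A t) = 0) (h_velocity : ∀ s, frameMap (F s) (A' s) = A s) :
    frameMap f' (A' t) = A' t + Pᵀ • A t := by
  have map_acc : frameMap (F t) A'' + Pᵀ • A t = 0 := by
    simpa [h_frame, h_velocity t] using congrArg (frameMap (F t)) h_acc
  calc frameMap f' (A' t)
      = frameMap f' (A' t) + (frameMap (F t) A'' + Pᵀ • A t) := by rw [map_acc, add_zero]
    _ = A' t + Pᵀ • A t := by
        rw [← add_assoc, frameMap_add_frameMap_of_hasDerivAt hF hA' hA h_velocity]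

theorem frameMap_deriv_deriv_frame (hA : HasDerivAt A (A' t) t) (hF' : HasDerivAt F' f'' t)
    (h_frame : ∀ s, frameMap (F' s) (A s) = -A s) :
    frameMap f'' (A t) = -(A' t + frameMap (F' t) (A' t)) := by
  rw [neg_add', eq_sub_iff_add_eq]
  exact frameMap_add_frameMap_of_hasDerivAt hF' hA hA.neg h_frame

theorem frameMap_deriv_deriv_horizontalFrame [NeZero (2 : 𝕜)] {P : 𝕜 → Matrix ι ι 𝕜}
    {Q P' : Matrix ι ι 𝕜}
    (hA : HasDerivAt A (A' t) t) (hA' : HasDerivAt A' A'' t) (hF' : HasDerivAt F' f'' t)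
    (hP : ∀ i j, HasDerivAt (fun s => P s i j) (P' i j) t)
    (h_acc : A'' + (P t)ᵀ • A' t + Qᵀ • A t = 0)
    (h_frame : ∀ s, frameMap (F' s) (A s) = -A s)
    (h_velocity : ∀ s, frameMap (F' s) (A' s) = A' s + (P s)ᵀ • A s) :
    frameMap f'' (horizontalFrame (F' t) (A' t)) = -((schwarzian (P t) Q P')ᵀ • A t) := by
  have map_double := map_velocity_add_map h_acc (h_frame t) (h_velocity t)
    (frameMap_deriv_deriv_frame hA hF' h_frame)
    (frameMap_add_frameMap_of_hasDerivAt hF' hA' (hA'.add (hasDerivAt_transpose_smul hP hA))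
      h_velocity)
  rw [← two_smul_horizontalFrame, ← two_smul_schwarzian, map_nsmul, smul_assoc, ← smul_neg,
    ← ofNat_smul_eq_nsmul 𝕜, ← ofNat_smul_eq_nsmul 𝕜, ← transpose_schwarzian] at map_double
  exact smul_right_injective _ two_ne_zero map_double

end Curves

end Frames

open scoped Matrix Matrix.Module in
theorem prop2_8_second_part_general
    {𝕜 ι V : Type*} [NontriviallyNormedField 𝕜] [NeZero (2 : 𝕜)] [Fintype ι]
    [NormedAddCommGroup V] [NormedSpace 𝕜 V]
    (A A' A'' : 𝕜 → ι → V)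
    (hA' : ∀ i t, HasDerivAt (fun s => A s i) (A' t i) t)
    (hA'' : ∀ i t, HasDerivAt (fun s => A' s i) (A'' t i) t)
    (F F' F'' : 𝕜 → V →L[𝕜] V)
    (hF0 : ∀ t i, F t (A t i) = 0)
    (hF1 : ∀ t i, F t (A' t i) = A t i)
    (hFd : ∀ t, HasDerivAt F (F' t) t)
    (hFd' : ∀ t, HasDerivAt F' (F'' t) t)
    (P Q P' : 𝕜 → Matrix ι ι 𝕜)
    (hPQ : ∀ t j, A'' t j + ∑ i, P t i j • A' t i + ∑ i, Q t i j • A t i = 0)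
    (hPd : ∀ i j t, HasDerivAt (fun s => P s i j) (P' t i j) t)
    (Sch : 𝕜 → Matrix ι ι 𝕜)
    (hSch : ∀ t, Sch t = (2 : 𝕜) • Q t - (1 / 2 : 𝕜) • (P t * P t) - P' t)
    (H : 𝕜 → ι → V)
    (hH : ∀ t j, H t j = (1 / 2 : 𝕜) • (A' t j + F' t (A' t j))) :
    ∀ t j,
      (1 / 4 : 𝕜) • F'' t (F'' t (A t j)) = (1 / 2 : 𝕜) • ∑ i, Sch t i j • A t i ∧
      (1 / 4 : 𝕜) • F'' t (F'' t (H t j)) = (1 / 2 : 𝕜) • ∑ i, Sch t i j • H t i := by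
  classical
  intro t j
  obtain rfl : H = fun t => horizontalFrame (F' t) (A' t) := funext₂ hH
  obtain rfl : Sch = fun t => schwarzian (P t) (Q t) (P' t) := funext hSch
  have hA s : HasDerivAt A (A' s) s := hasDerivAt_pi.2 fun i => hA' i s
  have hA₁ s : HasDerivAt A' (A'' s) s := hasDerivAt_pi.2 fun i => hA'' i s
  have h_acc s : A'' s + (P s)ᵀ • A' s + (Q s)ᵀ • A s = 0 := funext (hPQ s)
  have h_frame s : frameMap (F s) (A s) = 0 := funext (hF0 s)
  have h_velocity s : frameMap (F s) (A' s) = A s := funext (hF1 s)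
  have h_frame' s : frameMap (F' s) (A s) = -A s :=
    frameMap_deriv_frame (hA s) (hFd s) h_frame (h_velocity s)
  have h_velocity' s : frameMap (F' s) (A' s) = A' s + (P s)ᵀ • A s :=
    frameMap_deriv_velocity (hA s) (hA₁ s) (hFd s) (h_acc s) (h_frame s) h_velocity
  have h_frame'' : frameMap (F'' t) (A t) = -(2 • horizontalFrame (F' t) (A' t)) := by
    rw [two_smul_horizontalFrame, frameMap_deriv_deriv_frame (hA t) (hFd' t) h_frame']
  obtain ⟨hKA, hKH⟩ := map_map_of_map_eq_smul h_frame''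
    (frameMap_deriv_deriv_horizontalFrame (hA t) (hA₁ t) (hFd' t) (fun i k => hPd i k t)
      (h_acc t) h_frame' h_velocity')
  have quarter (v : V) : (1 / 4 : 𝕜) • 2 • v = (1 / 2 : 𝕜) • v := by
    rw [← ofNat_smul_eq_nsmul 𝕜, smul_smul, show (4 : 𝕜) = 2 * 2 by norm_num, one_div_mul_eq_div,
      div_mul_cancel_left₀ two_ne_zero, one_div]
  exact ⟨(congrArg _ (congrFun hKA j)).trans (quarter _),
    (congrArg _ (congrFun hKH j)).trans (quarter _)⟩

/-- **Proposition 2.8, second part.**  For a fanning frame `A` with Jacobi endomorphism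
`K(t) = (1/4) F̈(t)²`, horizontal frame `H_j(t) = P_h(t) ȧ_j(t) = (1/2)(ȧ_j(t) + Ḟ(t) ȧ_j(t))`
and Schwarzian `{A,t}`, one has, for all `t` and `j`:
`K(t) a_j(t) = (1/2) Σ_i a_i(t) {A,t}_{ij}` and `K(t) H_j(t) = (1/2) Σ_i H_i(t) {A,t}_{ij}`;
in particular `K(t)` preserves both `ℓ(t)` and `h(t)`. -/
theorem prop2_8_second_part
    {V : Type*} [NormedAddCommGroup V] [NormedSpace ℝ V] [FiniteDimensional ℝ V]
    {n : ℕ} (hn : 0 < n) (hdim : Module.finrank ℝ V = 2 * n)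
    (A A' A'' : ℝ → Fin n → V)
    (hA : ∀ i, ContDiff ℝ (⊤ : ℕ∞) (fun t => A t i))
    (hA' : ∀ i t, HasDerivAt (fun s => A s i) (A' t i) t)
    (hA'' : ∀ i t, HasDerivAt (fun s => A' s i) (A'' t i) t)
    (hfan : ∀ t, LinearIndependent ℝ (Sum.elim (A t) (A' t)) ∧
      Submodule.span ℝ (Set.range (Sum.elim (A t) (A' t))) = ⊤)
    (F F' F'' : ℝ → V →L[ℝ] V)
    (hF0 : ∀ t i, F t (A t i) = 0)
    (hF1 : ∀ t i, F t (A' t i) = A t i)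
    (hFd : ∀ t, HasDerivAt F (F' t) t)
    (hFd' : ∀ t, HasDerivAt F' (F'' t) t)
    (P Q P' : ℝ → Matrix (Fin n) (Fin n) ℝ)
    (hPQ : ∀ t j, A'' t j + ∑ i, P t i j • A' t i + ∑ i, Q t i j • A t i = 0)
    (hPd : ∀ i j t, HasDerivAt (fun s => P s i j) (P' t i j) t)
    (Sch : ℝ → Matrix (Fin n) (Fin n) ℝ)
    (hSch : ∀ t, Sch t = (2 : ℝ) • Q t - (1/2 : ℝ) • (P t * P t) - P' t)
    (H : ℝ → Fin n → V)
    (hH : ∀ t j, H t j = (1/2 : ℝ) • (A' t j + F' t (A' t j))) :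
    ∀ t j,
      (1/4 : ℝ) • F'' t (F'' t (A t j)) = (1/2 : ℝ) • ∑ i, Sch t i j • A t i ∧
      (1/4 : ℝ) • F'' t (F'' t (H t j)) = (1/2 : ℝ) • ∑ i, Sch t i j • H t i := by
  exact prop2_8_second_part_general A A' A'' hA' hA'' F F' F'' hF0 hF1 hFd hFd' P Q P' hPQ hPd
    Sch hSch H hH
end

section
/- Proposition 5.4: Let ω be a symplectic bilinear form on V and A a Lagrangian fanning frame, with horizontal frame H_i(t) = P_h(t)ȧ_i(t) and Jacobi endomorphism K(t). Then for all t and all i, j: ω(H_i(t), Ḣ_j(t)) = ω(K(t)a_i(t), ȧ_j(t)). Equivalently, the Wronskian W_h(t) of the horizontal curve h(t) and the Wronskian W(t) of ℓ(t) satisfy W_h(t)(H(t)u, H(t)v) = W(t)(K(t)u, v) for all u, v ∈ ℓ(t), where H(t) : ℓ(t) → h(t) is the linear map with H(t)a_i(t) = H_i(t). -/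
/-!
Differentiating `F a = 0` and `F ȧ = a` shows that `Ḟ` is an involution and that
`F̈ aᵢ = -2 Hᵢ`, so `K aᵢ = -(1/2) F̈ Hᵢ`. For a Lagrangian frame `F` is skew with respect to `ω`,
and hence so are `Ḟ` and `F̈`; skewness of the involution `Ḟ` makes its `+1` eigenspace `h`
isotropic. Finally `Ḣⱼ = P_h äⱼ + (1/2) F̈ ȧⱼ`, where `P_h äⱼ ∈ h` does not contribute to
`ω(Hᵢ, Ḣⱼ)`, and skewness of `F̈` moves the remaining term to `ω(K aᵢ, ȧⱼ)`.
-/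

section LinearAlgebra

variable {𝕜 V W : Type*} [Field 𝕜] [AddCommGroup V] [Module 𝕜 V] [TopologicalSpace V]
  [ContinuousConstSMul 𝕜 V] [AddCommGroup W] [Module 𝕜 W]

/-- The Jacobi endomorphism `K = (1/4) S²` attached to `S = F̈(t)`. -/
def jacobiEndomorphism (S : V →L[𝕜] V) : V →L[𝕜] V :=
  (1 / 4 : 𝕜) • S.comp S

theorem jacobiEndomorphism_apply (S : V →L[𝕜] V) (v : V) :
    jacobiEndomorphism S v = (1 / 4 : 𝕜) • S (S v) :=
  rfl

variable [IsTopologicalAddGroup V]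

/-- The horizontal projection `P_h = (1/2)(id + T)` attached to `T = Ḟ(t)`; it is the projection
onto the `+1` eigenspace when `T` is an involution and `2 ≠ 0`. -/
def horizontalProjection (T : V →L[𝕜] V) : V →L[𝕜] V :=
  (1 / 2 : 𝕜) • (ContinuousLinearMap.id 𝕜 V + T)

theorem horizontalProjection_apply (T : V →L[𝕜] V) (v : V) :
    horizontalProjection T v = (1 / 2 : 𝕜) • (v + T v) :=
  rfl

theorem apply_horizontalProjection_of_involutive {T : V →L[𝕜] V} (hT : Function.Involutive T)
    (v : V) : T (horizontalProjection T v) = horizontalProjection T v := by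
  rw [horizontalProjection_apply, map_smul, map_add, hT v, add_comm]

theorem horizontalProjection_isotropic_of_isSkewAdjoint {ω : V →ₗ[𝕜] V →ₗ[𝕜] W} {T : V →L[𝕜] V}
    (hT : Function.Involutive T) (hskew : ω.IsSkewAdjoint T) (v w : V) :
    ω (horizontalProjection T v) (horizontalProjection T w) = 0 := by
  have h_move : ω (horizontalProjection T v) w = -ω (horizontalProjection T v) (T w) := by
    simpa only [apply_horizontalProjection_of_involutive hT, Pi.neg_apply, map_neg]
      using hskew (horizontalProjection T v) w
  rw [horizontalProjection_apply T w, map_smul, map_add, h_move, neg_add_cancel, smul_zero]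

end LinearAlgebra

section Calculus

variable {𝕜 V W ι : Type*} [NontriviallyNormedField 𝕜] [NormedAddCommGroup V] [NormedSpace 𝕜 V]
  [NormedAddCommGroup W] [NormedSpace 𝕜 W]

theorem ext_of_dense_span_sumElim {a a' : ι → V}
    (hspan : Dense (Submodule.span 𝕜 (Set.range (Sum.elim a a')) : Set V)) {f g : V →L[𝕜] W}
    (ha : ∀ i, f (a i) = g (a i)) (ha' : ∀ i, f (a' i) = g (a' i)) : f = g := by
  refine ContinuousLinearMap.ext_on hspan ?_
  rintro _ ⟨i | i, rfl⟩
  exacts [ha i, ha' i]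

theorem isSkewAdjoint_of_hasDerivAt {ω : V →L[𝕜] V →L[𝕜] W} {G : 𝕜 → V →L[𝕜] V} {G' : V →L[𝕜] V}
    {t : 𝕜} (hG : HasDerivAt G G' t) (hskew : ∀ s, ω.toLinearMap₁₂.IsSkewAdjoint (G s)) :
    ω.toLinearMap₁₂.IsSkewAdjoint G' := by
  intro v w
  have h_left : HasDerivAt (fun s => ω (G s v) w) (ω (G' v) w) t :=
    ((ω.flip w).comp (ContinuousLinearMap.apply 𝕜 V v)).hasFDerivAt.comp_hasDerivAt t hG
  have h_right : HasDerivAt (fun s => ω v (-G s w)) (ω v (-G' w)) t :=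
    ((ω v).comp (ContinuousLinearMap.apply 𝕜 V w)).hasFDerivAt.comp_hasDerivAt t hG.neg
  have h_eq : (fun s => ω (G s v) w) = fun s => ω v (-G s w) := funext fun s => hskew s v w
  exact (h_eq ▸ h_left).unique h_right

theorem apply_deriv_eq_neg_of_apply_eq_zero {ω : V →L[𝕜] V →L[𝕜] W} {a b : 𝕜 → V} {a' b' : V}
    {t : 𝕜} (ha : HasDerivAt a a' t) (hb : HasDerivAt b b' t) (hzero : ∀ s, ω (a s) (b s) = 0) :
    ω (a t) b' = -ω a' (b t) := by
  have h := ω.hasDerivAt_of_bilinear (fun _ => ha) (fun _ => hb)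
  simp only [hzero] at h
  exact eq_neg_of_add_eq_zero_left (h.unique (hasDerivAt_const t (0 : W)))

/-- `F` is a fundamental endomorphism of the frame `A` with velocity `A'`: it kills the frame and
sends the velocity back to the frame. Spanning conditions on the frame, which make such an `F`
unique, are kept as separate hypotheses. -/
structure IsFundamentalEndomorphism (A A' : 𝕜 → ι → V) (F : 𝕜 → V →L[𝕜] V) : Prop where
  apply_frame : ∀ t i, F t (A t i) = 0
  apply_velocity : ∀ t i, F t (A' t i) = A t i

namespace IsFundamentalEndomorphism

variable {A A' A'' : 𝕜 → ι → V} {F F' F'' : 𝕜 → V →L[𝕜] V} {t : 𝕜}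

theorem deriv_apply_frame (hF : IsFundamentalEndomorphism A A' F) {i : ι}
    (hA : HasDerivAt (fun s => A s i) (A' t i) t) (hFd : HasDerivAt F (F' t) t) :
    F' t (A t i) = -A t i := by
  have h := hFd.clm_apply hA
  simp only [hF.apply_frame, hF.apply_velocity] at h
  exact eq_neg_of_add_eq_zero_left (h.unique (hasDerivAt_const t (0 : V)))

theorem deriv_apply_velocity (hF : IsFundamentalEndomorphism A A' F) {i : ι}
    (hA : HasDerivAt (fun s => A s i) (A' t i) t)
    (hA' : HasDerivAt (fun s => A' s i) (A'' t i) t) (hFd : HasDerivAt F (F' t) t) :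
    F' t (A' t i) = A' t i - F t (A'' t i) := by
  have h := hFd.clm_apply hA'
  simp only [hF.apply_velocity] at h
  exact eq_sub_of_add_eq (h.unique hA)

theorem deriv_comp_self (hF : IsFundamentalEndomorphism A A' F)
    (hspan : Dense (Submodule.span 𝕜 (Set.range (Sum.elim (A t) (A' t))) : Set V))
    (hA : ∀ i, HasDerivAt (fun s => A s i) (A' t i) t) (hFd : HasDerivAt F (F' t) t) :
    (F' t).comp (F t) = -F t := by
  refine ext_of_dense_span_sumElim hspan (fun i => ?_) (fun i => ?_)
  · simp [hF.apply_frame]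
  · simp [hF.apply_velocity, hF.deriv_apply_frame (hA i) hFd]

theorem deriv_involutive (hF : IsFundamentalEndomorphism A A' F)
    (hspan : Dense (Submodule.span 𝕜 (Set.range (Sum.elim (A t) (A' t))) : Set V))
    (hA : ∀ i, HasDerivAt (fun s => A s i) (A' t i) t)
    (hA' : ∀ i, HasDerivAt (fun s => A' s i) (A'' t i) t) (hFd : HasDerivAt F (F' t) t) :
    Function.Involutive (F' t) := by
  have h_frame (i : ι) : F' t (A t i) = -A t i := hF.deriv_apply_frame (hA i) hFd
  have h_velocity (i : ι) : F' t (A' t i) = A' t i - F t (A'' t i) :=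
    hF.deriv_apply_velocity (hA i) (hA' i) hFd
  have h_comp (v : V) : F' t (F t v) = -F t v :=
    DFunLike.congr_fun (hF.deriv_comp_self hspan hA hFd) v
  have h_sq : (F' t).comp (F' t) = ContinuousLinearMap.id 𝕜 V := by
    refine ext_of_dense_span_sumElim hspan (fun i => ?_) (fun i => ?_)
    · simp [h_frame]
    · simp [h_velocity, h_comp]
  exact DFunLike.congr_fun h_sq

theorem deriv_deriv_apply_frame [NeZero (2 : 𝕜)] (hF : IsFundamentalEndomorphism A A' F) {i : ι}
    (hA : ∀ s, HasDerivAt (fun u => A u i) (A' s i) s) (hFd : ∀ s, HasDerivAt F (F' s) s)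
    (hFdd : HasDerivAt F' (F'' t) t) :
    F'' t (A t i) = (-2 : 𝕜) • horizontalProjection (F' t) (A' t i) := by
  have h := hFdd.clm_apply (hA t)
  simp only [fun s => hF.deriv_apply_frame (hA s) (hFd s)] at h
  rw [eq_sub_of_add_eq (h.unique (hA t).neg), horizontalProjection_apply, smul_smul,
    neg_mul, mul_one_div_cancel two_ne_zero, neg_one_smul, neg_add']

theorem jacobiEndomorphism_apply_frame [NeZero (2 : 𝕜)] (hF : IsFundamentalEndomorphism A A' F)
    {i : ι} (hA : ∀ s, HasDerivAt (fun u => A u i) (A' s i) s)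
    (hFd : ∀ s, HasDerivAt F (F' s) s) (hFdd : HasDerivAt F' (F'' t) t) :
    jacobiEndomorphism (F'' t) (A t i) =
      -((1 / 2 : 𝕜) • F'' t (horizontalProjection (F' t) (A' t i))) := by
  have h_two : (2 : 𝕜) ≠ 0 := two_ne_zero
  have h_coeff : (1 / 4 : 𝕜) * -2 = -(1 / 2) := by
    rw [show (4 : 𝕜) = 2 * 2 by norm_num]
    field_simp
  rw [jacobiEndomorphism_apply, hF.deriv_deriv_apply_frame hA hFd hFdd, map_smul, smul_smul,
    h_coeff, neg_smul]

theorem isSkewAdjoint_of_isotropic {ω : V →L[𝕜] V →L[𝕜] W}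
    (hF : IsFundamentalEndomorphism A A' F)
    (hspan : Dense (Submodule.span 𝕜 (Set.range (Sum.elim (A t) (A' t))) : Set V))
    (hA : ∀ i, HasDerivAt (fun s => A s i) (A' t i) t)
    (hiso : ∀ s i j, ω (A s i) (A s j) = 0) :
    ω.toLinearMap₁₂.IsSkewAdjoint (F t) := by
  have h_bilin : ω.comp (F t) = -(ω.flip.comp (F t)).flip := by
    refine ext_of_dense_span_sumElim hspan (fun i => ?_) (fun i => ?_) <;>
      refine ext_of_dense_span_sumElim hspan (fun j => ?_) (fun j => ?_)
    · simp [hF.apply_frame]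
    · simp [hF.apply_frame, hF.apply_velocity, hiso]
    · simp [hF.apply_frame, hF.apply_velocity, hiso]
    · simp [hF.apply_velocity,
        apply_deriv_eq_neg_of_apply_eq_zero (hA i) (hA j) (fun s => hiso s i j)]
  intro v w
  simpa using DFunLike.congr_fun (DFunLike.congr_fun h_bilin v) w

end IsFundamentalEndomorphism

theorem hasDerivAt_horizontalProjection_apply {F' : 𝕜 → V →L[𝕜] V} {T : V →L[𝕜] V} {a : 𝕜 → V}
    {a' : V} {t : 𝕜} (hF' : HasDerivAt F' T t) (ha : HasDerivAt a a' t) :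
    HasDerivAt (fun s => horizontalProjection (F' s) (a s))
      (horizontalProjection (F' t) a' + (1 / 2 : 𝕜) • T (a t)) t := by
  refine ((ha.add (hF'.clm_apply ha)).const_smul (1 / 2 : 𝕜)).congr_deriv ?_
  rw [horizontalProjection_apply, ← smul_add]
  congr 1
  abel

theorem prop5_4_general [NeZero (2 : 𝕜)] (ω : V →L[𝕜] V →L[𝕜] W) {A A' A'' : 𝕜 → ι → V}
    {F F' F'' : 𝕜 → V →L[𝕜] V}
    (hspan : ∀ t, Dense (Submodule.span 𝕜 (Set.range (Sum.elim (A t) (A' t))) : Set V))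
    (hA : ∀ i t, HasDerivAt (fun s => A s i) (A' t i) t)
    (hA' : ∀ i t, HasDerivAt (fun s => A' s i) (A'' t i) t)
    (hiso : ∀ t i j, ω (A t i) (A t j) = 0)
    (hF : IsFundamentalEndomorphism A A' F)
    (hFd : ∀ t, HasDerivAt F (F' t) t) (hFdd : ∀ t, HasDerivAt F' (F'' t) t)
    {H Hd : 𝕜 → ι → V} (hH : ∀ t i, H t i = horizontalProjection (F' t) (A' t i))
    (hHd : ∀ i t, HasDerivAt (fun s => H s i) (Hd t i) t) (t : 𝕜) (i j : ι) :
    ω (H t i) (Hd t j) = ω (jacobiEndomorphism (F'' t) (A t i)) (A' t j) := by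
  have h_skew (s : 𝕜) : ω.toLinearMap₁₂.IsSkewAdjoint (F s) :=
    hF.isSkewAdjoint_of_isotropic (hspan s) (hA · s) hiso
  have h_skew' (s : 𝕜) : ω.toLinearMap₁₂.IsSkewAdjoint (F' s) :=
    isSkewAdjoint_of_hasDerivAt (hFd s) h_skew
  have h_skew'' : ω (F'' t (H t i)) (A' t j) = ω (H t i) (-F'' t (A' t j)) :=
    isSkewAdjoint_of_hasDerivAt (hFdd t) h_skew' (H t i) (A' t j)
  have h_iso : ω (H t i) (horizontalProjection (F' t) (A'' t j)) = 0 :=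
    hH t i ▸ horizontalProjection_isotropic_of_isSkewAdjoint
      (hF.deriv_involutive (hspan t) (hA · t) (hA' · t) (hFd t)) (h_skew' t) (A' t i) (A'' t j)
  have h_deriv : Hd t j = horizontalProjection (F' t) (A'' t j) + (1 / 2 : 𝕜) • F'' t (A' t j) :=
    ((funext fun s => hH s j) ▸ hHd j t).unique
      (hasDerivAt_horizontalProjection_apply (hFdd t) (hA' j t))
  calc ω (H t i) (Hd t j)
      = (1 / 2 : 𝕜) • ω (H t i) (F'' t (A' t j)) := by
        rw [h_deriv, map_add, h_iso, zero_add, map_smul]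
    _ = -((1 / 2 : 𝕜) • ω (F'' t (H t i)) (A' t j)) := by
        rw [h_skew'', map_neg, smul_neg, neg_neg]
    _ = ω (jacobiEndomorphism (F'' t) (A t i)) (A' t j) := by
        rw [hF.jacobiEndomorphism_apply_frame (hA i) hFd (hFdd t), ← hH]
        simp only [map_neg, map_smul, neg_apply, smul_apply]

end Calculus

/-- **Proposition 5.4.**  Let `ω` be a symplectic bilinear form on `V` and `A` a
Lagrangian fanning frame, with horizontal frame `H_i(t) = P_h(t) ȧ_i(t)` (whose
derivative is `Ḣ_i(t)`) and Jacobi endomorphism `K(t) = (1/4) F̈(t)²`.  Then for all `t`,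
`i`, `j`: `ω(H_i(t), Ḣ_j(t)) = ω(K(t) a_i(t), ȧ_j(t))`; i.e. the Wronskian of the
horizontal curve `h(t)` evaluated on `H(t)u, H(t)v` equals `W(t)(K(t)u, v)`. -/
theorem prop5_4
    {V : Type*} [NormedAddCommGroup V] [NormedSpace ℝ V] [FiniteDimensional ℝ V]
    {n : ℕ} (hn : 0 < n) (hdim : Module.finrank ℝ V = 2 * n)
    (ω : V →ₗ[ℝ] V →ₗ[ℝ] ℝ)
    (halt : ∀ v, ω v v = 0)
    (hnd : ∀ v, (∀ w, ω v w = 0) → v = 0)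
    (A A' : ℝ → Fin n → V)
    (hA : ∀ i, ContDiff ℝ (⊤ : ℕ∞) (fun t => A t i))
    (hA' : ∀ i t, HasDerivAt (fun s => A s i) (A' t i) t)
    (hfan : ∀ t, LinearIndependent ℝ (Sum.elim (A t) (A' t)) ∧
      Submodule.span ℝ (Set.range (Sum.elim (A t) (A' t))) = ⊤)
    (hLag : ∀ t i j, ω (A t i) (A t j) = 0)
    (F F' F'' : ℝ → V →L[ℝ] V)
    (hF0 : ∀ t i, F t (A t i) = 0)
    (hF1 : ∀ t i, F t (A' t i) = A t i)
    (hFd : ∀ t, HasDerivAt F (F' t) t)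
    (hFd' : ∀ t, HasDerivAt F' (F'' t) t)
    (H Hd : ℝ → Fin n → V)
    (hH : ∀ t j, H t j = (1/2 : ℝ) • (A' t j + F' t (A' t j)))
    (hHd : ∀ j t, HasDerivAt (fun u => H u j) (Hd t j) t) :
    ∀ t i j, ω (H t i) (Hd t j) = ω ((1/4 : ℝ) • F'' t (F'' t (A t i))) (A' t j) := by
  have hA'' (i : Fin n) (t : ℝ) :
      HasDerivAt (fun s => A' s i) (deriv (fun s => A' s i) t) t := by
    have h_deriv : deriv (fun s => A s i) = fun s => A' s i := funext fun s => (hA' i s).deriv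
    have h_diff := ((hA i).of_le (by norm_cast)).differentiable_deriv_two
    exact (h_deriv ▸ h_diff t).hasDerivAt
  have hspan (t : ℝ) :
      Dense (Submodule.span ℝ (Set.range (Sum.elim (A t) (A' t))) : Set V) := by
    rw [(hfan t).2]
    exact dense_univ
  exact prop5_4_general ω.toContinuousBilinearMap hspan hA' hA'' hLag ⟨hF0, hF1⟩ hFd hFd' hH hHd
end

section
/- Frame-independence of the fundamental endomorphism: Let A = (a_1, …, a_n) be a fanning frame in V, let G : ℝ → GL_n(ℝ) be a smooth curve of invertible n×n real matrices, and define the frame B = (b_1, …, b_n) by b_j(t) = Σ_i a_i(t)·G(t)_{ij}, so that B spans the same curve of subspaces ℓ(t) as A. Then B is also fanning, and the fundamental endomorphisms coincide: F_B(t) = F_A(t) for all t. In particular the fundamental endomorphism depends only on the curve t ↦ ℓ(t) and not on the chosen frame. -/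
/-!
Differentiating `B = A G` gives `(B, B') = (A, A') [[G, G'], [0, G]]`. The block triangular matrix
is invertible because `G` is, so `(B, B')` is a basis whenever `(A, A')` is. Moreover `F_A` kills
the span of `A` and sends `A'` to `A`, hence it kills `B = A G` and sends `B' = A G' + A' G` to
`A G = B`. These two properties characterise `F_B`.

Square matrices act on families of vectors from the left, by `(P • v) i = ∑ j, P i j • v j`, so
`B = A G` reads `B = Gᵀ • A` below and the blocks above appear transposed.
-/

open scoped Topology Matrix Matrix.Module

section MatrixAction

variable {R M ι : Type*} [Ring R] [AddCommGroup M] [Module R M] [Fintype ι] [DecidableEq ι]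

lemma linearCombination_matrix_smul (P : Matrix ι ι R) (v : ι → M) (c : ι → R) :
    Fintype.linearCombination R (P • v) c = Fintype.linearCombination R v (c ᵥ* P) := by
  simp only [Fintype.linearCombination_apply, Matrix.Module.smul_apply, Matrix.vecMul, dotProduct,
    Finset.smul_sum, Finset.sum_smul, mul_smul]
  exact Finset.sum_comm

lemma linearIndependent_matrix_smul {P : Matrix ι ι R} (hP : IsUnit P) {v : ι → M}
    (hv : LinearIndependent R v) : LinearIndependent R (P • v) := by
  rw [linearIndependent_iff_injective_fintypeLinearCombination] at hv ⊢
  have h_comp : ⇑(Fintype.linearCombination R (P • v)) =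
      Fintype.linearCombination R v ∘ (· ᵥ* P) :=
    funext (linearCombination_matrix_smul P v)
  rw [h_comp]
  exact hv.comp (Matrix.vecMul_injective_of_isUnit hP)

lemma span_range_matrix_smul_le (P : Matrix ι ι R) (v : ι → M) :
    Submodule.span R (Set.range (P • v)) ≤ Submodule.span R (Set.range v) := by
  rw [Submodule.span_le]
  rintro _ ⟨i, rfl⟩
  exact Submodule.sum_mem _ fun j _ =>
    Submodule.smul_mem _ _ (Submodule.subset_span (Set.mem_range_self j))

lemma span_range_matrix_smul {P : Matrix ι ι R} (hP : IsUnit P) (v : ι → M) :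
    Submodule.span R (Set.range (P • v)) = Submodule.span R (Set.range v) := by
  obtain ⟨u, rfl⟩ := hP
  refine (span_range_matrix_smul_le _ v).antisymm ?_
  calc Submodule.span R (Set.range v)
      = Submodule.span R (Set.range (u⁻¹ • u • v)) := by rw [inv_smul_smul]
    _ ≤ Submodule.span R (Set.range (u • v)) := span_range_matrix_smul_le _ _

lemma map_matrix_smul_apply {N : Type*} [AddCommGroup N] [Module R N] (f : M →ₗ[R] N)
    (P : Matrix ι ι R) (v : ι → M) (i : ι) : f ((P • v) i) = (P • (f ∘ v)) i :=
  congrFun ((f.mapMatrixModule ι).map_smul P v) i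

end MatrixAction

lemma hasDerivAt_matrix_smul {𝕜 V ι : Type*} [NontriviallyNormedField 𝕜] [NormedAddCommGroup V]
    [NormedSpace 𝕜 V] [Fintype ι] [DecidableEq ι] {P : 𝕜 → Matrix ι ι 𝕜} {P' : Matrix ι ι 𝕜}
    {A : 𝕜 → ι → V} {A' : ι → V} {t : 𝕜}
    (hP : ∀ i j, HasDerivAt (fun s => P s i j) (P' i j) t)
    (hA : ∀ i, HasDerivAt (fun s => A s i) (A' i) t) (i : ι) :
    HasDerivAt (fun s => (P s • A s) i) ((P' • A t + P t • A') i) t := by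
  have h_sum := HasDerivAt.fun_sum (u := Finset.univ) fun j _ => (hP i j).fun_smul (hA j)
  simpa only [Matrix.Module.smul_apply, Pi.add_apply, Finset.sum_add_distrib, add_comm] using h_sum

/-- The pair `(a, a')`, thought of as a frame and its derivative at a given time, satisfies the
fanning condition: the vectors `a i` and `a' i` together form a basis. The condition is phrased as
linear independence together with spanning. -/
def IsFanning (R : Type*) {M ι : Type*} [Semiring R] [AddCommMonoid M] [Module R M]
    (a a' : ι → M) : Prop :=
  LinearIndependent R (Sum.elim a a') ∧ Submodule.span R (Set.range (Sum.elim a a')) = ⊤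

/-- `F` is a fundamental endomorphism of the pair `(a, a')`, thought of as a frame and its
derivative at a given time. It is unique when the pair is fanning, see
`IsFundamentalEndomorphism.unique`. -/
def IsFundamentalEndomorphism_s12 {R M ι : Type*} [Semiring R] [AddCommMonoid M] [Module R M]
    (F : M →ₗ[R] M) (a a' : ι → M) : Prop :=
  (∀ i, F (a i) = 0) ∧ ∀ i, F (a' i) = a i

lemma IsFanning.matrix_smul {R M ι : Type*} [CommRing R] [AddCommGroup M] [Module R M]
    [Fintype ι] [DecidableEq ι] {a a' : ι → M} (ha : IsFanning R a a') {P : Matrix ι ι R}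
    (hP : IsUnit P) (P' : Matrix ι ι R) : IsFanning R (P • a) (P' • a + P • a') := by
  have h_block : Sum.elim (P • a) (P' • a + P • a') =
      Matrix.fromBlocks P 0 P' P • Sum.elim a a' := by
    ext (i | i) <;> simp
  have h_unit : IsUnit (Matrix.fromBlocks P 0 P' P) := Matrix.isUnit_fromBlocks_zero₁₂.2 ⟨hP, hP⟩
  unfold IsFanning
  rw [h_block, span_range_matrix_smul h_unit]
  exact ⟨linearIndependent_matrix_smul h_unit ha.1, ha.2⟩

namespace IsFundamentalEndomorphism_s12

lemma matrix_smul {R M ι : Type*} [Ring R] [AddCommGroup M] [Module R M] [Fintype ι]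
    [DecidableEq ι] {F : M →ₗ[R] M} {a a' : ι → M} (hF : IsFundamentalEndomorphism_s12 F a a')
    (P P' : Matrix ι ι R) : IsFundamentalEndomorphism_s12 F (P • a) (P' • a + P • a') := by
  have h_zero : F ∘ a = 0 := funext hF.1
  have h_frame : F ∘ a' = a := funext hF.2
  constructor <;> intro i
  · rw [map_matrix_smul_apply, h_zero, smul_zero, Pi.zero_apply]
  · rw [Pi.add_apply, map_add, map_matrix_smul_apply, map_matrix_smul_apply, h_zero, h_frame,
      smul_zero, Pi.zero_apply, zero_add]

lemma unique {R M ι : Type*} [Semiring R] [AddCommMonoid M] [Module R M] {F F' : M →ₗ[R] M}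
    {a a' : ι → M} (hF : IsFundamentalEndomorphism_s12 F a a')
    (hF' : IsFundamentalEndomorphism_s12 F' a a')
    (h_span : Submodule.span R (Set.range (Sum.elim a a')) = ⊤) : F = F' := by
  refine LinearMap.ext_on_range h_span ?_
  rintro (i | i)
  · exact (hF.1 i).trans (hF'.1 i).symm
  · exact (hF.2 i).trans (hF'.2 i).symm

end IsFundamentalEndomorphism_s12

theorem fundamental_endomorphism_frame_independent_general {𝕜 V ι : Type*}
    [NontriviallyNormedField 𝕜] [NormedAddCommGroup V] [NormedSpace 𝕜 V] [Fintype ι]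
    [DecidableEq ι] {A B : 𝕜 → ι → V} {A' B' : ι → V} {G : 𝕜 → Matrix ι ι 𝕜} {t : 𝕜}
    (hA' : ∀ i, HasDerivAt (fun s => A s i) (A' i) t)
    (hB' : ∀ j, HasDerivAt (fun s => B s j) (B' j) t)
    (hG : ∀ i j, DifferentiableAt 𝕜 (fun s => G s i j) t) (hGinv : IsUnit (G t))
    (hB : ∀ᶠ s in 𝓝 t, ∀ j, B s j = ∑ i, G s i j • A s i)
    (hfan : IsFanning 𝕜 (A t) A') {F FB : V →ₗ[𝕜] V}
    (hF : IsFundamentalEndomorphism_s12 F (A t) A')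
    (hFB : IsFundamentalEndomorphism_s12 FB (B t) B') :
    IsFanning 𝕜 (B t) B' ∧ FB = F := by
  let G' : Matrix ι ι 𝕜 := Matrix.of fun i j => deriv (fun s => G s i j) t
  have h_frame : B t = (G t)ᵀ • A t := funext hB.self_of_nhds
  have h_deriv : B' = G'ᵀ • A t + (G t)ᵀ • A' := by
    funext j
    have h_smul : HasDerivAt (fun s => ((G s)ᵀ • A s) j) ((G'ᵀ • A t + (G t)ᵀ • A') j) t :=
      hasDerivAt_matrix_smul (fun i k => (hG k i).hasDerivAt) hA' j
    exact (hB' j).unique (h_smul.congr_of_eventuallyEq (hB.mono fun _ hs => hs j))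
  rw [h_frame, h_deriv] at hFB ⊢
  have h_fan := hfan.matrix_smul ((Matrix.isUnit_transpose _).2 hGinv) G'ᵀ
  exact ⟨h_fan, hFB.unique (hF.matrix_smul _ _) h_fan.2⟩

/-- **Frame-independence of the fundamental endomorphism.**  Let `A` be a fanning frame
in `V`, `G : ℝ → GL_n(ℝ)` a smooth curve of invertible matrices, and let `B` be the
frame `b_j(t) = Σ_i a_i(t)·G(t)_{ij}` (spanning the same curve of subspaces).  Then `B`
is fanning and the fundamental endomorphisms coincide: `F_B(t) = F_A(t)` for all `t`. -/
theorem fundamental_endomorphism_frame_independent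
    {V : Type*} [NormedAddCommGroup V] [NormedSpace ℝ V] [FiniteDimensional ℝ V]
    {n : ℕ} (hn : 0 < n) (hdim : Module.finrank ℝ V = 2 * n)
    (A A' : ℝ → Fin n → V)
    (hA : ∀ i, ContDiff ℝ (⊤ : ℕ∞) (fun t => A t i))
    (hA' : ∀ i t, HasDerivAt (fun s => A s i) (A' t i) t)
    (hfan : ∀ t, LinearIndependent ℝ (Sum.elim (A t) (A' t)) ∧
      Submodule.span ℝ (Set.range (Sum.elim (A t) (A' t))) = ⊤)
    (F : ℝ → V →L[ℝ] V)
    (hF0 : ∀ t i, F t (A t i) = 0)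
    (hF1 : ∀ t i, F t (A' t i) = A t i)
    (G : ℝ → Matrix (Fin n) (Fin n) ℝ)
    (hG : ∀ i j, ContDiff ℝ (⊤ : ℕ∞) (fun t => G t i j))
    (hGinv : ∀ t, IsUnit (G t))
    (B B' : ℝ → Fin n → V)
    (hB : ∀ t j, B t j = ∑ i, G t i j • A t i)
    (hB' : ∀ j t, HasDerivAt (fun u => B u j) (B' t j) t)
    (FB : ℝ → V →L[ℝ] V)
    (hFB0 : ∀ t i, FB t (B t i) = 0)
    (hFB1 : ∀ t i, FB t (B' t i) = B t i) :
    (∀ t, LinearIndependent ℝ (Sum.elim (B t) (B' t)) ∧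
      Submodule.span ℝ (Set.range (Sum.elim (B t) (B' t))) = ⊤) ∧
    (∀ t, FB t = F t) := by
  have h_general t := fundamental_endomorphism_frame_independent_general (hA' · t) (hB' · t)
    (fun i j => (hG i j).differentiable (by simp) t) (hGinv t) (.of_forall hB) (hfan t)
    (F := (F t : V →ₗ[ℝ] V)) (FB := (FB t : V →ₗ[ℝ] V)) ⟨hF0 t, hF1 t⟩ ⟨hFB0 t, hFB1 t⟩
  exact ⟨fun t => (h_general t).1, fun t => ContinuousLinearMap.coe_injective (h_general t).2⟩
end
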